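/- arXiv:math/0112091 — 11 statements merged into one kernel-verified Lean document; each statement's English description precedes it below -/
import Mathlib

section
/- Let B be a complex Banach algebra with unit e, let A be a complex unital algebra, and let φ : A → B be an injective unital algebra homomorphism whose range φ(A) is dense in B. Then A has property (P_A) with respect to φ if and only if A has property (~P_A) with respect to φ. -/
/-- Lemma `lemlocglob` (a): for an injective unital algebra morphism `φ : A → B` into a
unital complex Banach algebra `B` with dense range, the local spectral invariance property
`(P_A)` holds if and only if the global property `(~P_A)` (`φ⁻¹(B⁻¹) = A⁻¹`) holds. -/
theorem stmt_0
    (B : Type*) [NormedRing B] [NormedAlgebra ℂ B] [CompleteSpace B]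
    (A : Type*) [Ring A] [Algebra ℂ A]
    (φ : A →ₐ[ℂ] B)
    (hinj : Function.Injective φ)
    (hdense : DenseRange φ) :
    (∃ ε > (0 : ℝ), ∀ x : A, ‖φ x‖ < ε →
        ∃ u : Bˣ, (u : B) = 1 + φ x ∧
          ∃ (c : ℂ) (y : A), ((u⁻¹ : Bˣ) : B) = c • (1 : B) + φ y)
      ↔ (∀ a : A, IsUnit (φ a) ↔ IsUnit a) := by
  constructor
  · rintro ⟨ε, hε, H⟩ a
    refine ⟨?_, fun h => h.map φ⟩
    rintro ⟨v, hv⟩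
    have hcont : Continuous (fun w : B => ‖(v : B) * w - 1‖) := by fun_prop
    have hopen : IsOpen {w : B | ‖(v : B) * w - 1‖ < ε} := isOpen_lt hcont continuous_const
    obtain ⟨b, hb⟩ := hdense.exists_mem_open hopen ⟨((v⁻¹ : Bˣ) : B), by simpa using hε⟩
    have hb' : ‖φ (a * b - 1)‖ < ε := by
      simpa [hv] using hb
    obtain ⟨u, hu, c, y, hy⟩ := H (a * b - 1) hb'
    have hu' : (u : B) = φ (a * b) := by rw [hu]; simp
    have hz : ((u⁻¹ : Bˣ) : B) = φ (c • 1 + y) := by rw [hy]; simp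
    have h1 : a * (b * (c • 1 + y)) = 1 := by
      apply hinj
      rw [← mul_assoc, map_mul, ← hu', ← hz, map_one, Units.mul_inv]
    have h2 : φ (b * (c • 1 + y)) = ((v⁻¹ : Bˣ) : B) := by
      apply Units.eq_inv_of_mul_eq_one_left
      rw [hv, ← map_mul, h1, map_one]
    have h3 : (b * (c • 1 + y)) * a = 1 := by
      apply hinj
      rw [map_mul, h2, ← hv, map_one, Units.inv_mul]
    exact ⟨⟨a, _, h1, h3⟩, rfl⟩
  · intro H
    refine ⟨1, one_pos, fun x hx => ?_⟩
    have hunit : IsUnit (φ (1 + x)) := by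
      have h := (Units.oneSub (-φ x) (by simpa using hx)).isUnit
      simpa using h
    obtain ⟨w, hw⟩ := (H _).1 hunit
    refine ⟨Units.map (φ : A →* B) w, by simp [hw], 0, ((w⁻¹ : Aˣ) : A), ?_⟩
    rw [← map_inv]
    simp
end

section
/- Let B be a unital C*-algebra with unit e, let A be a complex unital algebra, and let φ : A → B be an injective unital algebra homomorphism whose range φ(A) is symmetric in B (i.e., closed under the adjoint operation of B). Then A has property (P_A) with respect to φ if and only if A has property (~P_A) with respect to φ. -/
/-- Lemma `lemlocglob` (b): for an injective unital algebra morphism `φ : A → B` into a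
unital C*-algebra `B` whose range `φ(A)` is symmetric (closed under the adjoint), the local
spectral invariance property `(P_A)` holds if and only if the global property `(~P_A)`
(`φ⁻¹(B⁻¹) = A⁻¹`) holds. -/
theorem stmt_1
    (B : Type*) [NormedRing B] [StarRing B] [CStarRing B]
    [NormedAlgebra ℂ B] [StarModule ℂ B] [CompleteSpace B]
    (A : Type*) [Ring A] [Algebra ℂ A]
    (φ : A →ₐ[ℂ] B)
    (hinj : Function.Injective φ)
    (hsymm : ∀ a : A, ∃ b : A, φ b = star (φ a)) :
    (∃ ε > (0 : ℝ), ∀ x : A, ‖φ x‖ < ε →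
        ∃ u : Bˣ, (u : B) = 1 + φ x ∧
          ∃ (c : ℂ) (y : A), ((u⁻¹ : Bˣ) : B) = c • (1 : B) + φ y)
      ↔ (∀ a : A, IsUnit (φ a) ↔ IsUnit a) := by
  constructor
  · rintro ⟨ε, hε, H⟩
    -- elements of `A` whose image is close to `1` are invertible in `A`
    have key : ∀ z : A, ‖φ z - 1‖ < ε → IsUnit z := by
      intro z hz
      obtain ⟨u, hu, c, y, hy⟩ := H (z - 1) (by simpa using hz)
      have hu' : (u : B) = φ z := by rw [hu]; simp
      have hw : ((u⁻¹ : Bˣ) : B) = φ (c • 1 + y) := by rw [hy]; simp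
      refine ⟨⟨z, c • 1 + y, hinj ?_, hinj ?_⟩, rfl⟩
      · rw [map_mul, ← hw, ← hu', map_one, Units.mul_inv]
      · rw [map_mul, ← hw, ← hu', map_one, Units.inv_mul]
    have key2 : ∀ x y : A, IsUnit y → ‖Ring.inverse (φ y) * φ x - 1‖ < ε → IsUnit x := by
      rintro x _ ⟨y, rfl⟩ h
      have h1 : Ring.inverse (φ (y : A)) = φ ((y⁻¹ : Aˣ) : A) :=
        Ring.inverse_unit (Units.map (φ : A →* B) y)
      rw [h1, ← map_mul] at h
      exact (Units.isUnit_units_mul y⁻¹ x).1 (key _ h)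
    -- invertibility for self-adjoint elements, by a connectedness argument
    have key3 : ∀ a : A, IsSelfAdjoint (φ a) → IsUnit (φ a) → IsUnit a := by
      intro a ha hua
      let : CStarAlgebra B := {}
      let g : ℝ → A := fun t => a + algebraMap ℂ A (Complex.I * t)
      let f : ℝ → B := fun t => φ a + algebraMap ℂ B (Complex.I * t)
      have hfg : ∀ t, φ (g t) = f t := by intro t; simp [f, g]
      have hfc : Continuous f := by
        have := (algebraMapCLM ℂ B).continuous
        have h2 : Continuous fun t : ℝ => algebraMap ℂ B (Complex.I * t) :=
          this.comp (by fun_prop : Continuous fun t : ℝ => Complex.I * (t : ℂ))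
        exact continuous_const.add h2
      have hfu : ∀ t, IsUnit (f t) := by
        intro t
        by_cases ht : t = 0
        · simpa [f, ht] using hua
        · have h1 : -(Complex.I * t) ∉ spectrum ℂ (φ a) := by
            intro hm
            have := ha.mem_spectrum_eq_re hm
            have := congrArg Complex.im this
            simp at this
            exact ht this
          rw [spectrum.notMem_iff] at h1
          have h2 := h1.neg
          have h3 : -(algebraMap ℂ B (-(Complex.I * t)) - φ a) = f t := by
            simp only [f, map_neg]; abel
          rwa [h3] at h2
      have hinv : ∀ t, ContinuousAt (fun s => Ring.inverse (f s)) t := by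
        intro t
        obtain ⟨u, hu⟩ := hfu t
        have h1 : ContinuousAt Ring.inverse (f t) := hu ▸ NormedRing.inverse_continuousAt u
        exact ContinuousAt.comp (f := f) h1 hfc.continuousAt
      have hev1 : ∀ t, ∀ᶠ s in nhds t, ‖Ring.inverse (f s) * f t - 1‖ < ε := by
        intro t
        have hc : ContinuousAt (fun s => ‖Ring.inverse (f s) * f t - 1‖) t :=
          (((hinv t).mul continuousAt_const).sub continuousAt_const).norm
        refine hc.eventually_lt continuousAt_const ?_
        rw [Ring.inverse_mul_cancel _ (hfu t)]; simpa using hε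
      have hev2 : ∀ t, ∀ᶠ s in nhds t, ‖Ring.inverse (f t) * f s - 1‖ < ε := by
        intro t
        have hc : ContinuousAt (fun s => ‖Ring.inverse (f t) * f s - 1‖) t :=
          ((continuousAt_const.mul hfc.continuousAt).sub continuousAt_const).norm
        refine hc.eventually_lt continuousAt_const ?_
        rw [Ring.inverse_mul_cancel _ (hfu t)]; simpa using hε
      have hclopen : IsClopen {t : ℝ | IsUnit (g t)} := by
        constructor
        · rw [← isOpen_compl_iff, isOpen_iff_mem_nhds]
          intro t ht
          filter_upwards [hev1 t] with s hs hsu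
          exact ht (key2 _ _ hsu (by rwa [hfg, hfg]))
        · rw [isOpen_iff_mem_nhds]
          intro t ht
          filter_upwards [hev2 t] with s hs
          exact key2 _ _ ht (by rwa [hfg, hfg])
      have hne : {t : ℝ | IsUnit (g t)}.Nonempty := by
        obtain ⟨T, hT⟩ := exists_gt (‖φ a‖ / ε)
        have hT0 : 0 < T := lt_of_le_of_lt (by positivity) hT
        have hTI : (Complex.I * T) ≠ 0 := by
          simp [hT0.ne']
        refine ⟨T, ?_⟩
        have h1 : IsUnit (algebraMap ℂ A (Complex.I * T)) := (IsUnit.mk0 _ hTI).map _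
        have h2 : IsUnit (1 + (Complex.I * T)⁻¹ • a) := by
          apply key
          have : φ (1 + (Complex.I * T)⁻¹ • a) - 1 = (Complex.I * T)⁻¹ • φ a := by simp
          rw [this, norm_smul]
          have h3 : ‖(Complex.I * (T : ℂ))⁻¹‖ = T⁻¹ := by
            simp [abs_of_pos hT0]
          rw [h3, inv_mul_lt_iff₀ hT0]
          exact (div_lt_iff₀ hε).1 hT
        have h4 := h1.mul h2
        have h5 : algebraMap ℂ A (Complex.I * T) * (1 + (Complex.I * T)⁻¹ • a) = g T := by
          rw [← Algebra.smul_def, smul_add, smul_smul, mul_inv_cancel₀ hTI, one_smul,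
            ← Algebra.algebraMap_eq_smul_one, add_comm]
        rwa [h5] at h4
      have h0 : (0 : ℝ) ∈ {t : ℝ | IsUnit (g t)} := by
        rw [hclopen.eq_univ hne]; trivial
      simpa [g] using h0
    intro a
    refine ⟨fun ha => ?_, fun ha => ha.map φ⟩
    obtain ⟨b, hb⟩ := hsymm a
    have hba : IsUnit (b * a) := by
      apply key3
      · rw [map_mul, hb]; exact IsSelfAdjoint.star_mul_self _
      · rw [map_mul, hb]; exact ha.star.mul ha
    have hab : IsUnit (a * b) := by
      apply key3
      · rw [map_mul, hb]; exact IsSelfAdjoint.mul_star_self _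
      · rw [map_mul, hb]; exact ha.mul ha.star
    obtain ⟨u, hu⟩ := hba
    obtain ⟨v, hv⟩ := hab
    have hl : ((u⁻¹ : Aˣ) * b) * a = 1 := by rw [mul_assoc, ← hu, Units.inv_mul]
    have hr : a * (b * (v⁻¹ : Aˣ)) = 1 := by rw [← mul_assoc, ← hv, Units.mul_inv]
    have he := left_inv_eq_right_inv hl hr
    exact ⟨⟨a, _, hr, he ▸ hl⟩, rfl⟩
  · intro H
    refine ⟨1, one_pos, fun x hx => ?_⟩
    have h1 : IsUnit (1 + φ x) := by
      have := isUnit_one_sub_of_norm_lt_one (x := -φ x) (by simpa using hx)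
      simpa using this
    have h2 : IsUnit (1 + x) := (H _).1 (by simpa using h1)
    obtain ⟨w, hw⟩ := h2
    refine ⟨Units.map (φ : A →* B) w, by simp [hw], 0, ((w⁻¹ : Aˣ) : A), ?_⟩
    rw [zero_smul, zero_add]; rfl
end

section
/- Let B be a complex Banach algebra with unit, let A be a complex unital Banach algebra, and let ι : A → B be an injective unital algebra homomorphism with dense range such that the spectral radius of a computed in A equals the spectral radius of ι(a) computed in B, for every a ∈ A. Then A is spectrally invariant in B: an element a ∈ A is invertible in A if and only if ι(a) is invertible in B. -/
/-- Lemma `lemlaf`: if `A` is a unital Banach algebra continuously embedded (as an injective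
unital morphism `ι` with dense range) in a unital Banach algebra `B`, and the spectral radius
of every `a ∈ A` computed in `A` agrees with the one of `ι a` computed in `B`, then `A` is
spectrally invariant in `B`: `a` is invertible in `A` iff `ι a` is invertible in `B`. -/
theorem stmt_2
    (B : Type*) [NormedRing B] [NormedAlgebra ℂ B] [CompleteSpace B]
    (A : Type*) [NormedRing A] [NormedAlgebra ℂ A] [CompleteSpace A]
    (ι : A →ₐ[ℂ] B)
    (hinj : Function.Injective ι)
    (hdense : DenseRange ι)
    (hrad : ∀ a : A, spectralRadius ℂ a = spectralRadius ℂ (ι a)) :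
    ∀ a : A, IsUnit a ↔ IsUnit (ι a) := by
  intro a
  refine ⟨fun h => h.map ι, fun h => ?_⟩
  have key : ∀ y : A, ‖ι y‖ * ‖(1 : B)‖ < 1 → IsUnit (1 - y) := by
    intro y hy
    have h1 : spectralRadius ℂ (ι y) ≤ (‖ι y‖₊ : ENNReal) * (‖(1 : B)‖₊ : ENNReal) := by
      simpa using spectrum.spectralRadius_le_pow_nnnorm_pow_one_div ℂ (ι y) 0
    have h2 : spectralRadius ℂ y < (‖(1 : ℂ)‖₊ : ENNReal) := by
      rw [hrad]
      refine lt_of_le_of_lt h1 ?_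
      rw [← ENNReal.coe_mul, ENNReal.coe_lt_coe, ← NNReal.coe_lt_coe]
      simpa using hy
    have h3 := spectrum.mem_resolventSet_of_spectralRadius_lt h2
    simpa [spectrum.mem_resolventSet_iff] using h3
  obtain ⟨u, hu⟩ := h
  let S : Set B := {b | ‖1 - ι a * b‖ * ‖(1 : B)‖ < 1 ∧ ‖1 - b * ι a‖ * ‖(1 : B)‖ < 1}
  have hS : IsOpen S := by
    apply IsOpen.and
    · exact isOpen_lt (by fun_prop) continuous_const
    · exact isOpen_lt (by fun_prop) continuous_const
  have hne : S.Nonempty := ⟨(↑u⁻¹ : B), by simp [S, ← hu]⟩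
  obtain ⟨x, hx1, hx2⟩ := hdense.exists_mem_open hS hne
  have e1 : IsUnit (a * x) := by
    have := key (1 - a * x) (by simpa using hx1)
    simpa using this
  have e2 : IsUnit (x * a) := by
    have := key (1 - x * a) (by simpa using hx2)
    simpa using this
  obtain ⟨v, hv⟩ := e1
  obtain ⟨w, hw⟩ := e2
  rw [isUnit_iff_exists_and_exists]
  refine ⟨⟨x * ↑v⁻¹, ?_⟩, ⟨↑w⁻¹ * x, ?_⟩⟩
  · rw [← mul_assoc, ← hv, Units.mul_inv]
  · rw [mul_assoc, ← hw, Units.inv_mul]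
end

section
/- In the ideal–quotient setting, assume that I is dense in J with respect to the norm of B. If property (P_I) and property (~P) both hold, then property (P_A) holds: there exists δ > 0 such that every a ∈ A with ‖a − e‖_B < δ is invertible in B with inverse belonging to A. -/
/-- Theorem `thm4.02` (a), ideal–quotient setting: `B` a unital complex Banach algebra,
`J ⊊ B` a proper closed two-sided ideal, `A ⊆ B` a unital subalgebra, `I ⊆ A ∩ J` a
two-sided ring ideal of `A` which is dense in `J`.  If property `(P_I)` and property `(~P)`
hold, then property `(P_A)` holds: there is `δ > 0` such that every `a ∈ A` with
`‖a - e‖ < δ` is invertible in `B` with inverse in `A`. -/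
theorem stmt_3
    (B : Type*) [NormedRing B] [NormedAlgebra ℂ B] [CompleteSpace B]
    (A : Subalgebra ℂ B)
    (J : TwoSidedIdeal B) (hJclosed : IsClosed (J : Set B))
    (hJproper : (J : Set B) ≠ Set.univ)
    (I : Set B) (hIA : I ⊆ (A : Set B)) (hIJ : ∀ x ∈ I, x ∈ J)
    (hI0 : (0 : B) ∈ I) (hIadd : ∀ x ∈ I, ∀ y ∈ I, x + y ∈ I)
    (hIneg : ∀ x ∈ I, -x ∈ I)
    (hIl : ∀ a ∈ A, ∀ x ∈ I, a * x ∈ I) (hIr : ∀ a ∈ A, ∀ x ∈ I, x * a ∈ I)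
    (hIdense : (J : Set B) ⊆ closure I)
    -- property (P_I)
    (hPI : ∃ ε > (0 : ℝ), ∀ x ∈ I, ‖x‖ < ε →
        ∃ u : Bˣ, (u : B) = 1 + x ∧
          ∃ (c : ℂ), ∃ y ∈ I, ((u⁻¹ : Bˣ) : B) = c • (1 : B) + y)
    -- property (~P)
    (hPt : ∀ a ∈ A, (∃ b : B, a * b - 1 ∈ J ∧ b * a - 1 ∈ J) →
        ∃ a₁ ∈ A, a * a₁ - 1 ∈ I ∧ a₁ * a - 1 ∈ I) :
    -- property (P_A)
    ∃ δ > (0 : ℝ), ∀ a ∈ A, ‖a - 1‖ < δ →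
        ∃ u : Bˣ, (u : B) = a ∧ ((u⁻¹ : Bˣ) : B) ∈ A := by
  obtain ⟨ε, hε, hP⟩ := hPI
  refine ⟨1, one_pos, fun a ha hn => ?_⟩
  obtain ⟨u, hu⟩ : ∃ u : Bˣ, (u : B) = a :=
    ⟨Units.oneSub (1 - a) (by rwa [norm_sub_rev]), by simp⟩
  refine ⟨u, hu, ?_⟩
  subst hu
  obtain ⟨a₁, ha₁, hj, -⟩ := hPt (u : B) ha ⟨((u⁻¹ : Bˣ) : B), by simp, by simp⟩
  have hz : ((u⁻¹ : Bˣ) : B) * ((u : B) * a₁ - 1) ∈ closure I :=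
    hIdense (J.mul_mem_left _ _ (hIJ _ hj))
  have hpos : 0 < ‖(u : B)‖ + 1 := by positivity
  obtain ⟨x, hx, hd⟩ := Metric.mem_closure_iff.1 hz (ε / (‖(u : B)‖ + 1)) (by positivity)
  rw [dist_eq_norm, lt_div_iff₀ hpos] at hd
  have hw : (u : B) * a₁ - 1 + -((u : B) * x) ∈ I := hIadd _ hj _ (hIneg _ (hIl _ ha _ hx))
  have heq : (u : B) * a₁ - 1 + -((u : B) * x)
      = (u : B) * (((u⁻¹ : Bˣ) : B) * ((u : B) * a₁ - 1) - x) := by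
    rw [mul_sub, Units.mul_inv_cancel_left, sub_eq_add_neg _ ((u : B) * x)]
  have hlt : ‖(u : B) * a₁ - 1 + -((u : B) * x)‖ < ε := by
    rw [heq]
    refine (norm_mul_le _ _).trans_lt (lt_of_le_of_lt ?_ hd)
    nlinarith [norm_nonneg (((u⁻¹ : Bˣ) : B) * ((u : B) * a₁ - 1) - x)]
  obtain ⟨v, hv, c, y, hy, hvi⟩ := hP _ hw hlt
  have hvu : (v : B) = (u : B) * (a₁ - x) := by rw [hv, mul_sub]; abel
  have hfin : ((u⁻¹ : Bˣ) : B) = (a₁ - x) * ((v⁻¹ : Bˣ) : B) := by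
    rw [← (Units.inv_mul_eq_iff_eq_mul u).2 hvu, mul_assoc, Units.mul_inv, mul_one]
  rw [hfin]
  refine A.mul_mem (A.sub_mem ha₁ (hIA hx)) ?_
  rw [hvi]
  exact A.add_mem (A.smul_mem A.one_mem c) (hIA hy)
end

section
/- In the ideal–quotient setting, assume that I is dense in J with respect to the norm of B. If property (P_A) holds, then property (P_{A/I}) holds. -/
/-- Theorem `thm4.02` (b), ideal–quotient setting: `B` a unital complex Banach algebra,
`J ⊊ B` a proper closed two-sided ideal, `A ⊆ B` a unital subalgebra, `I ⊆ A ∩ J` a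
two-sided ring ideal of `A` which is dense in `J`.  If property `(P_A)` holds, then
property `(P_{A/I})` holds. -/
theorem stmt_4
    (B : Type*) [NormedRing B] [NormedAlgebra ℂ B] [CompleteSpace B]
    (A : Subalgebra ℂ B)
    (J : TwoSidedIdeal B) (hJclosed : IsClosed (J : Set B))
    (hJproper : (J : Set B) ≠ Set.univ)
    (I : Set B) (hIA : I ⊆ (A : Set B)) (hIJ : ∀ x ∈ I, x ∈ J)
    (hI0 : (0 : B) ∈ I) (hIadd : ∀ x ∈ I, ∀ y ∈ I, x + y ∈ I)
    (hIneg : ∀ x ∈ I, -x ∈ I)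
    (hIl : ∀ a ∈ A, ∀ x ∈ I, a * x ∈ I) (hIr : ∀ a ∈ A, ∀ x ∈ I, x * a ∈ I)
    (hIdense : (J : Set B) ⊆ closure I)
    -- property (P_A)
    (hPA : ∃ ε > (0 : ℝ), ∀ x ∈ A, ‖x‖ < ε →
        ∃ u : Bˣ, (u : B) = 1 + x ∧ ((u⁻¹ : Bˣ) : B) ∈ A) :
    -- property (P_{A/I})
    ∃ ε > (0 : ℝ), ∀ a ∈ A, Metric.infDist a (J : Set B) < ε →
        ∃ a₁ ∈ A, (1 + a) * a₁ - 1 ∈ J ∧ a₁ * (1 + a) - 1 ∈ J := by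
  obtain ⟨ε, hε, h⟩ := hPA
  refine ⟨ε, hε, fun a ha hd => ?_⟩
  have h1 : Metric.infDist a I < ε := by
    rw [← Metric.infDist_closure]
    exact lt_of_le_of_lt
      (Metric.infDist_le_infDist_of_subset hIdense ⟨0, hIJ 0 hI0⟩) hd
  obtain ⟨i, hi, hai⟩ := (Metric.infDist_lt_iff ⟨0, hI0⟩).1 h1
  rw [dist_eq_norm] at hai
  obtain ⟨u, hu, huA⟩ := h (a - i) (A.sub_mem ha (hIA hi)) hai
  have e : 1 + a = u + i := by rw [hu]; abel
  refine ⟨_, huA, ?_, ?_⟩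
  · rw [e, add_mul, Units.mul_inv, add_sub_cancel_left]
    exact J.mul_mem_right _ _ (hIJ i hi)
  · rw [e, mul_add, Units.inv_mul, add_sub_cancel_left]
    exact J.mul_mem_left _ _ (hIJ i hi)
end

section
/- In the ideal–quotient setting, assume that I is dense in J and that A is dense in B, both with respect to the norm of B. If property (P_A) holds, then property (~P) holds. -/
/-- Theorem `thm4.02` (c), ideal–quotient setting: `B` a unital complex Banach algebra,
`J ⊊ B` a proper closed two-sided ideal, `A ⊆ B` a unital subalgebra, `I ⊆ A ∩ J` a
two-sided ring ideal of `A`.  If `I` is dense in `J`, `A` is dense in `B`, and property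
`(P_A)` holds, then property `(~P)` holds. -/
theorem stmt_5
    (B : Type*) [NormedRing B] [NormedAlgebra ℂ B] [CompleteSpace B]
    (A : Subalgebra ℂ B)
    (J : TwoSidedIdeal B) (hJclosed : IsClosed (J : Set B))
    (hJproper : (J : Set B) ≠ Set.univ)
    (I : Set B) (hIA : I ⊆ (A : Set B)) (hIJ : ∀ x ∈ I, x ∈ J)
    (hI0 : (0 : B) ∈ I) (hIadd : ∀ x ∈ I, ∀ y ∈ I, x + y ∈ I)
    (hIneg : ∀ x ∈ I, -x ∈ I)
    (hIl : ∀ a ∈ A, ∀ x ∈ I, a * x ∈ I) (hIr : ∀ a ∈ A, ∀ x ∈ I, x * a ∈ I)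
    (hIdense : (J : Set B) ⊆ closure I)
    (hAdense : Dense (A : Set B))
    -- property (P_A)
    (hPA : ∃ ε > (0 : ℝ), ∀ x ∈ A, ‖x‖ < ε →
        ∃ u : Bˣ, (u : B) = 1 + x ∧ ((u⁻¹ : Bˣ) : B) ∈ A) :
    -- property (~P)
    ∀ a ∈ A, (∃ b : B, a * b - 1 ∈ J ∧ b * a - 1 ∈ J) →
        ∃ a₁ ∈ A, a * a₁ - 1 ∈ I ∧ a₁ * a - 1 ∈ I := by
  obtain ⟨ε, hε, hP⟩ := hPA
  rintro a ha ⟨b, hab, hba⟩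
  -- right inverse modulo I
  have hR : ∃ r ∈ A, a * r - 1 ∈ I := by
    have hmem : (b, a * b - 1) ∈ closure ((A : Set B) ×ˢ I) := by
      rw [closure_prod_eq]
      exact ⟨hAdense b, hIdense hab⟩
    have hopen : IsOpen {p : B × B | ‖a * p.1 - 1 - p.2‖ < ε} :=
      isOpen_lt (by fun_prop) continuous_const
    obtain ⟨⟨b', i⟩, hlt, hb', hi⟩ := mem_closure_iff.1 hmem _ hopen (by simpa using hε)
    simp only [Set.mem_setOf_eq] at hlt hb' hi
    have hb'' : b' ∈ A := hb'
    obtain ⟨u, hu, hv⟩ := hP (a * b' - 1 - i)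
      (A.sub_mem (A.sub_mem (A.mul_mem ha hb'') A.one_mem) (hIA hi)) hlt
    refine ⟨b' * ((u⁻¹ : Bˣ) : B), A.mul_mem hb'' hv, ?_⟩
    have h1 : a * b' = u + i := by rw [hu]; abel
    have h2 : a * (b' * ((u⁻¹ : Bˣ) : B)) - 1 = i * ((u⁻¹ : Bˣ) : B) := by
      rw [← mul_assoc, h1, add_mul, Units.mul_inv, add_sub_cancel_left]
    rw [h2]
    exact hIr _ hv _ hi
  -- left inverse modulo I
  have hL : ∃ l ∈ A, l * a - 1 ∈ I := by
    have hmem : (b, b * a - 1) ∈ closure ((A : Set B) ×ˢ I) := by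
      rw [closure_prod_eq]
      exact ⟨hAdense b, hIdense hba⟩
    have hopen : IsOpen {p : B × B | ‖p.1 * a - 1 - p.2‖ < ε} :=
      isOpen_lt (by fun_prop) continuous_const
    obtain ⟨⟨b', i⟩, hlt, hb', hi⟩ := mem_closure_iff.1 hmem _ hopen (by simpa using hε)
    simp only [Set.mem_setOf_eq] at hlt hb' hi
    have hb'' : b' ∈ A := hb'
    obtain ⟨u, hu, hv⟩ := hP (b' * a - 1 - i)
      (A.sub_mem (A.sub_mem (A.mul_mem hb'' ha) A.one_mem) (hIA hi)) hlt
    refine ⟨((u⁻¹ : Bˣ) : B) * b', A.mul_mem hv hb'', ?_⟩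
    have h1 : b' * a = u + i := by rw [hu]; abel
    have h2 : ((u⁻¹ : Bˣ) : B) * b' * a - 1 = ((u⁻¹ : Bˣ) : B) * i := by
      rw [mul_assoc, h1, mul_add, Units.inv_mul, add_sub_cancel_left]
    rw [h2]
    exact hIl _ hv _ hi
  obtain ⟨r, hr, hri⟩ := hR
  obtain ⟨l, hl, hli⟩ := hL
  refine ⟨r, hr, hri, ?_⟩
  have key : r * a - 1 = (l * (a * r - 1)) * a + (-((l * a - 1) * r * a) + (l * a - 1)) := by
    noncomm_ring
  rw [key]
  exact hIadd _ (hIr _ ha _ (hIl _ hl _ hri)) _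
    (hIadd _ (hIneg _ (hIr _ ha _ (hIr _ hr _ hli))) _ hli)
end

section
/- In the ideal–quotient setting, property (~P) implies property (P_{A/I}). Moreover, if in addition A ∩ J = I (so the induced map A/I → B/J is injective) and A + J is dense in B (so the induced map has dense range in the quotient Banach algebra B/J), then property (P_{A/I}) holds if and only if property (~P) holds. -/
/-- Theorem `thm4.02` (e), ideal–quotient setting: property `(~P)` implies property
`(P_{A/I})`; moreover, if the induced map `A/I → B/J` is injective (`A ∩ J = I`) and has
dense range (`A + J` dense in `B`), then `(P_{A/I})` holds if and only if `(~P)` holds. -/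
theorem stmt_7
    (B : Type*) [NormedRing B] [NormedAlgebra ℂ B] [CompleteSpace B]
    (A : Subalgebra ℂ B)
    (J : TwoSidedIdeal B) (hJclosed : IsClosed (J : Set B))
    (hJproper : (J : Set B) ≠ Set.univ)
    (I : Set B) (hIA : I ⊆ (A : Set B)) (hIJ : ∀ x ∈ I, x ∈ J)
    (hI0 : (0 : B) ∈ I) (hIadd : ∀ x ∈ I, ∀ y ∈ I, x + y ∈ I)
    (hIneg : ∀ x ∈ I, -x ∈ I)
    (hIl : ∀ a ∈ A, ∀ x ∈ I, a * x ∈ I) (hIr : ∀ a ∈ A, ∀ x ∈ I, x * a ∈ I) :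
    -- (~P) implies (P_{A/I})
    ((∀ a ∈ A, (∃ b : B, a * b - 1 ∈ J ∧ b * a - 1 ∈ J) →
        ∃ a₁ ∈ A, a * a₁ - 1 ∈ I ∧ a₁ * a - 1 ∈ I) →
      (∃ ε > (0 : ℝ), ∀ a ∈ A, Metric.infDist a (J : Set B) < ε →
        ∃ a₁ ∈ A, (1 + a) * a₁ - 1 ∈ J ∧ a₁ * (1 + a) - 1 ∈ J)) ∧
    -- if `A ∩ J = I` and `A + J` is dense in `B`, then (P_{A/I}) ↔ (~P)
    (((A : Set B) ∩ (J : Set B) = I) →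
      Dense {x : B | ∃ a ∈ A, ∃ j ∈ J, x = a + j} →
      ((∃ ε > (0 : ℝ), ∀ a ∈ A, Metric.infDist a (J : Set B) < ε →
          ∃ a₁ ∈ A, (1 + a) * a₁ - 1 ∈ J ∧ a₁ * (1 + a) - 1 ∈ J) ↔
        (∀ a ∈ A, (∃ b : B, a * b - 1 ∈ J ∧ b * a - 1 ∈ J) →
          ∃ a₁ ∈ A, a * a₁ - 1 ∈ I ∧ a₁ * a - 1 ∈ I))) := by
  have hne : (J : Set B).Nonempty := ⟨0, J.zero_mem⟩
  have key : (∀ a ∈ A, (∃ b : B, a * b - 1 ∈ J ∧ b * a - 1 ∈ J) →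
        ∃ a₁ ∈ A, a * a₁ - 1 ∈ I ∧ a₁ * a - 1 ∈ I) →
      (∃ ε > (0 : ℝ), ∀ a ∈ A, Metric.infDist a (J : Set B) < ε →
        ∃ a₁ ∈ A, (1 + a) * a₁ - 1 ∈ J ∧ a₁ * (1 + a) - 1 ∈ J) := by
    intro h
    refine ⟨1, one_pos, fun a ha hd => ?_⟩
    obtain ⟨j, hj, hjd⟩ := (Metric.infDist_lt_iff hne).1 hd
    have hj' : j ∈ J := hj
    have hn : ‖j - a‖ < 1 := by rwa [dist_comm, dist_eq_norm] at hjd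
    have hu : IsUnit (1 - (j - a)) := isUnit_one_sub_of_norm_lt_one hn
    obtain ⟨u, hu⟩ := hu
    have e : 1 + a = u + j := by rw [hu]; abel
    obtain ⟨a₁, h1, h2, h3⟩ := h (1 + a) (A.add_mem A.one_mem ha) ⟨(u⁻¹ : Bˣ), by
      rw [e, add_mul, Units.mul_inv, add_sub_cancel_left]
      exact J.mul_mem_right _ _ hj', by
      rw [e, mul_add, Units.inv_mul, add_sub_cancel_left]
      exact J.mul_mem_left _ _ hj'⟩
    exact ⟨a₁, h1, hIJ _ h2, hIJ _ h3⟩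
  refine ⟨key, fun hAJ hD => ⟨?_, key⟩⟩
  rintro ⟨ε, hε, h⟩ a ha ⟨b, hab, hba⟩
  have hpos : 0 < ‖a‖ + 1 := by positivity
  obtain ⟨x, ⟨a', ha', j, hj, rfl⟩, hx⟩ := Metric.dense_iff.1 hD b (ε / (‖a‖ + 1)) (by positivity)
    |>.imp fun x hx => And.intro hx.2 hx.1
  rw [Metric.mem_ball, dist_eq_norm, lt_div_iff₀ hpos] at hx
  have hd : Metric.infDist (a * a' - 1) (J : Set B) < ε := by
    have hm : (a * b - 1) - a * j ∈ J := J.sub_mem hab (J.mul_mem_left _ _ hj)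
    refine (Metric.infDist_lt_iff hne).2 ⟨_, hm, ?_⟩
    have e : a * a' - 1 - ((a * b - 1) - a * j) = a * (a' + j - b) := by noncomm_ring
    rw [dist_eq_norm, e]
    have := norm_mul_le a (a' + j - b)
    nlinarith [norm_nonneg (a' + j - b)]
  obtain ⟨a₁, ha₁, h1, -⟩ := h _ (A.sub_mem (A.mul_mem ha ha') A.one_mem) hd
  have hr : a' * a₁ ∈ A := A.mul_mem ha' ha₁
  have h2 : a * (a' * a₁) - 1 ∈ J := by
    have e : a * (a' * a₁) - 1 = (1 + (a * a' - 1)) * a₁ - 1 := by noncomm_ring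
    rwa [e]
  generalize a' * a₁ = r at hr h2
  have h3 : r * a - 1 ∈ J := by
    have e : r * a - 1 = (b * (a * r - 1) - (b * a - 1) * r) * a + (b * a - 1) := by noncomm_ring
    rw [e]
    exact J.add_mem (J.mul_mem_right _ _
      (J.sub_mem (J.mul_mem_left _ _ h2) (J.mul_mem_right _ _ hba))) hba
  refine ⟨r, hr, ?_, ?_⟩ <;> rw [← hAJ]
  · exact ⟨A.sub_mem (A.mul_mem ha hr) A.one_mem, h2⟩
  · exact ⟨A.sub_mem (A.mul_mem hr ha) A.one_mem, h3⟩
end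

section
/- Let B be a unital C*-algebra with unit e, let J ⊊ B be a proper closed two-sided ideal with J* = J, let A ⊆ B be a subalgebra with e ∈ A and A* = A, and let I ⊆ A be a two-sided ideal of the ring A with I ⊆ J and I* = I. Assume I is dense in J. If (i) every element of ℂ·e + I that is invertible in the algebra ℂ·e + J has its inverse in ℂ·e + I, and (ii) for every a ∈ A the existence of b ∈ B with ab − e ∈ J and ba − e ∈ J implies the existence of a₁ ∈ A with a·a₁ − e ∈ I and a₁·a − e ∈ I, then A is spectrally invariant in B: every a ∈ A that is invertible in B has its inverse in A. -/
/-- Corollary `coreins`: `B` a unital C*-algebra, `J ⊊ B` a proper closed two-sided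
*-ideal, `A ⊆ B` a symmetric unital subalgebra, `I ⊆ A ∩ J` a symmetric two-sided ring
ideal of `A` which is dense in `J`.  If (i) `ℂ·e + I` is spectrally invariant in
`ℂ·e + J`, and (ii) classes in `A/I` invertible modulo `J` are invertible modulo `I`
(`φ⁻¹((B/J)⁻¹) = (A/I)⁻¹`), then `A` is spectrally invariant in `B`. -/
theorem stmt_8
    (B : Type*) [NormedRing B] [StarRing B] [CStarRing B]
    [NormedAlgebra ℂ B] [StarModule ℂ B] [CompleteSpace B]
    (A : Subalgebra ℂ B) (hAstar : ∀ a ∈ A, star a ∈ A)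
    (J : TwoSidedIdeal B) (hJclosed : IsClosed (J : Set B))
    (hJproper : (J : Set B) ≠ Set.univ) (hJstar : ∀ x ∈ J, star x ∈ J)
    (I : Set B) (hIA : I ⊆ (A : Set B)) (hIJ : ∀ x ∈ I, x ∈ J)
    (hIstar : ∀ x ∈ I, star x ∈ I)
    (hI0 : (0 : B) ∈ I) (hIadd : ∀ x ∈ I, ∀ y ∈ I, x + y ∈ I)
    (hIneg : ∀ x ∈ I, -x ∈ I)
    (hIl : ∀ a ∈ A, ∀ x ∈ I, a * x ∈ I) (hIr : ∀ a ∈ A, ∀ x ∈ I, x * a ∈ I)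
    (hIdense : (J : Set B) ⊆ closure I)
    -- (i): `ℂ·e + I` is spectrally invariant in `ℂ·e + J`
    (hi : ∀ (c : ℂ), ∀ x ∈ I, ∀ w : B,
        ((c • (1 : B) + x) * w = 1 ∧ w * (c • (1 : B) + x) = 1) →
        (∃ d : ℂ, ∃ y ∈ J, w = d • (1 : B) + y) →
        ∃ d : ℂ, ∃ y ∈ I, w = d • (1 : B) + y)
    -- (ii): `φ⁻¹((B/J)⁻¹) = (A/I)⁻¹`
    (hii : ∀ a ∈ A, (∃ b : B, a * b - 1 ∈ J ∧ b * a - 1 ∈ J) →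
        ∃ a₁ ∈ A, a * a₁ - 1 ∈ I ∧ a₁ * a - 1 ∈ I) :
    -- `A` is spectrally invariant in `B`
    ∀ a ∈ A, ∀ u : Bˣ, (u : B) = a → ((u⁻¹ : Bˣ) : B) ∈ A := by
  intro a ha u hu
  obtain ⟨a₁, ha₁, h1, -⟩ := hii a ha ⟨((u⁻¹ : Bˣ) : B), by
    subst hu; simp [J.zero_mem], by subst hu; simp [J.zero_mem]⟩
  have hJm : -(((u⁻¹ : Bˣ) : B) * (a * a₁ - 1)) ∈ J :=
    J.neg_mem (J.mul_mem_left _ _ (hIJ _ h1))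
  have hcl := hIdense hJm
  have hopen : IsOpen {z : B | IsUnit (a * (a₁ + z))} :=
    Units.isOpen.preimage (f := fun z : B => a * (a₁ + z)) (by fun_prop)
  have hmem : -(((u⁻¹ : Bˣ) : B) * (a * a₁ - 1)) ∈ {z : B | IsUnit (a * (a₁ + z))} := by
    have : a * (a₁ + -(((u⁻¹ : Bˣ) : B) * (a * a₁ - 1))) = 1 := by
      subst hu
      rw [mul_add, mul_neg, Units.mul_inv_cancel_left]
      abel
    show IsUnit _
    rw [this]
    exact isUnit_one
  obtain ⟨z, hz, hzI⟩ := mem_closure_iff.1 hcl _ hopen hmem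
  obtain ⟨v, hv⟩ := hz
  have hx : (a * a₁ - 1) + a * z ∈ I := hIadd _ h1 _ (hIl a ha z hzI)
  have hvx : (1 : ℂ) • (1 : B) + ((a * a₁ - 1) + a * z) = v := by
    rw [hv, one_smul, mul_add]; abel
  obtain ⟨d, y, hy, hw⟩ := hi 1 _ hx ((v⁻¹ : Bˣ) : B)
    ⟨by rw [hvx]; simp, by rw [hvx]; simp⟩
    ⟨1, -(((a * a₁ - 1) + a * z) * ((v⁻¹ : Bˣ) : B)),
      J.neg_mem (J.mul_mem_right _ _ (hIJ _ hx)), by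
        have h2 : (a * a₁ - 1) + a * z = v - 1 := by rw [← hvx, one_smul]; abel
        rw [h2, sub_mul, Units.mul_inv, one_smul]; simp⟩
  have hwA : ((v⁻¹ : Bˣ) : B) ∈ A := by
    rw [hw]
    exact A.add_mem (A.smul_mem A.one_mem d) (hIA hy)
  have hfin : ((u⁻¹ : Bˣ) : B) = (a₁ + z) * ((v⁻¹ : Bˣ) : B) := by
    have h3 : (u : B) * ((a₁ + z) * ((v⁻¹ : Bˣ) : B)) = 1 := by
      rw [hu, ← mul_assoc, ← hv, Units.mul_inv]
    rw [← Units.inv_mul_cancel_left u ((a₁ + z) * ((v⁻¹ : Bˣ) : B)), h3, mul_one]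
  rw [hfin]
  exact A.mul_mem (A.add_mem ha₁ (hIA hzI)) hwA
end

section
/- Let B be a complex Banach algebra with unit e, let A ⊆ B be a unital subalgebra (e ∈ A) that is spectrally invariant in B, and let J ⊊ A be a proper semi-ideal of A. Let x ∈ J, λ ∈ ℂ, a = λe + x, and let μ ∈ ℂ be such that μe − a is invertible in B. Then μ ≠ λ, the resolvent satisfies the identity (μe − a)⁻¹ = (μ − λ)⁻¹ e + (μ − λ)⁻² x + (μ − λ)⁻² x (μe − a)⁻¹ x, and consequently (μe − a)⁻¹ − (μ − λ)⁻¹ e ∈ J, i.e., the resolvent of a lies in ℂ·e + J. -/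
/-- Proposition `prop4.6` (b), resolvent identity: in a unital complex Banach algebra `B`
with a spectrally invariant unital subalgebra `A` and a proper semi-ideal `J ⊊ A`, for
`x ∈ J`, `a = λ•e + x` and `μ` in the resolvent set of `a`, one has `μ ≠ λ`, the identity
`(μe − a)⁻¹ = (μ−λ)⁻¹ e + (μ−λ)⁻² x + (μ−λ)⁻² x (μe−a)⁻¹ x`, and consequently
`(μe − a)⁻¹ − (μ−λ)⁻¹ e ∈ J`. -/
theorem stmt_11
    (B : Type*) [NormedRing B] [NormedAlgebra ℂ B] [CompleteSpace B]
    (A : Subalgebra ℂ B)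
    (hAinv : ∀ a ∈ A, ∀ u : Bˣ, (u : B) = a → ((u⁻¹ : Bˣ) : B) ∈ A)
    (J : Submodule ℂ B) (hJA : (J : Set B) ⊆ (A : Set B))
    (hsemi : ∀ x ∈ J, ∀ b ∈ A, ∀ y ∈ J, x * b * y ∈ J)
    (hproper : (J : Set B) ≠ (A : Set B))
    (x : B) (hx : x ∈ J) (lam mu : ℂ)
    (u : Bˣ) (hu : (u : B) = mu • (1 : B) - (lam • (1 : B) + x)) :
    mu ≠ lam ∧
    ((u⁻¹ : Bˣ) : B) = (mu - lam)⁻¹ • (1 : B) + ((mu - lam) ^ 2)⁻¹ • x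
        + ((mu - lam) ^ 2)⁻¹ • (x * ((u⁻¹ : Bˣ) : B) * x) ∧
    ((u⁻¹ : Bˣ) : B) - (mu - lam)⁻¹ • (1 : B) ∈ J := by
  have hxA : x ∈ A := hJA hx
  have huA : (u : B) ∈ A := by
    rw [hu]
    exact A.sub_mem (A.smul_mem A.one_mem _) (A.add_mem (A.smul_mem A.one_mem _) hxA)
  have hvA : ((u⁻¹ : Bˣ) : B) ∈ A := hAinv _ huA u rfl
  have hne : mu ≠ lam := by
    rintro rfl
    have hxu : x = -(u : B) := by rw [hu]; abel
    apply hproper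
    refine Set.Subset.antisymm hJA ?_
    intro b hb
    have h := hsemi x hx _ (A.mul_mem (A.mul_mem hvA hb) hvA) x hx
    have e : x * (((u⁻¹ : Bˣ) : B) * b * ((u⁻¹ : Bˣ) : B)) * x = b := by
      rw [hxu]
      simp [mul_assoc]
    rw [e] at h
    exact h
  have hc : mu - lam ≠ 0 := sub_ne_zero.mpr hne
  have hu' : (u : B) = (mu - lam) • (1 : B) - x := by rw [hu, sub_smul]; abel
  have h1 : (mu - lam) • ((u⁻¹ : Bˣ) : B) = 1 + x * ((u⁻¹ : Bˣ) : B) := by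
    have h := u.mul_inv
    rw [hu', sub_mul, smul_mul_assoc, one_mul] at h
    exact sub_eq_iff_eq_add.mp h
  have h2 : (mu - lam) • ((u⁻¹ : Bˣ) : B) = 1 + ((u⁻¹ : Bˣ) : B) * x := by
    have h := u.inv_mul
    rw [hu', mul_sub, mul_smul_comm, mul_one] at h
    exact sub_eq_iff_eq_add.mp h
  have h3 : (mu - lam) ^ 2 • ((u⁻¹ : Bˣ) : B)
      = (mu - lam) • (1 : B) + x + x * ((u⁻¹ : Bˣ) : B) * x := by
    rw [pow_two, mul_smul, h1, smul_add, ← mul_smul_comm, h2, mul_add, mul_one, mul_assoc,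
      add_assoc]
  have hid : ((u⁻¹ : Bˣ) : B) = (mu - lam)⁻¹ • (1 : B) + ((mu - lam) ^ 2)⁻¹ • x
        + ((mu - lam) ^ 2)⁻¹ • (x * ((u⁻¹ : Bˣ) : B) * x) := by
    have h4 : ((mu - lam) ^ 2)⁻¹ • ((mu - lam) ^ 2 • ((u⁻¹ : Bˣ) : B)) = ((u⁻¹ : Bˣ) : B) :=
      inv_smul_smul₀ (pow_ne_zero 2 hc) _
    rw [h3, smul_add, smul_add, smul_smul] at h4
    have h5 : ((mu - lam) ^ 2)⁻¹ * (mu - lam) = (mu - lam)⁻¹ := by field_simp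
    rw [h5] at h4
    exact h4.symm
  refine ⟨hne, hid, ?_⟩
  have h6 : ((u⁻¹ : Bˣ) : B) - (mu - lam)⁻¹ • (1 : B) = ((mu - lam) ^ 2)⁻¹ • x
        + ((mu - lam) ^ 2)⁻¹ • (x * ((u⁻¹ : Bˣ) : B) * x) := by
    rw [sub_eq_iff_eq_add', ← add_assoc]
    exact hid
  rw [h6]
  exact J.add_mem (J.smul_mem _ hx) (J.smul_mem _ (hsemi x hx _ hvA x hx))
end

section
/- For all f, g ∈ 𝒮(ℝ, A) and all i, j ∈ ℕ, the twisted convolution f * g is a smooth A-valued function whose j-th derivative at t equals ∫_ℝ f(s)·α_s(g^{(j)}(t − s)) ds, and one has the estimate ‖f * g‖_{i,j} ≤ C · Σ_{β+γ=i} (i choose β) · (‖f‖_{β,0} + ‖f‖_{β+M,0}) · ‖g‖_{γ,j}. -/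
open MeasureTheory SchwartzMap in
theorem tw_wint {A : Type*} [NormedRing A] [NormedAlgebra ℂ A]
    (C : ℝ) (M : ℕ) (f : SchwartzMap ℝ A) (b : ℕ) :
    Integrable (fun s : ℝ => C * (|s| ^ b * ‖f s‖ + |s| ^ (b + M) * ‖f s‖)) :=
  ((f.integrable_pow_mul volume b).add (f.integrable_pow_mul volume (b + M))).const_mul C

open MeasureTheory SchwartzMap in
theorem tw_kint {A : Type*} [NormedRing A] [NormedAlgebra ℂ A]
    (C : ℝ) (M : ℕ) (f h : SchwartzMap ℝ A) (b c : ℕ) (t : ℝ) :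
    Integrable (fun s : ℝ => (C * (|s| ^ b * ‖f s‖ + |s| ^ (b + M) * ‖f s‖)) *
      (|t - s| ^ c * ‖h (t - s)‖)) := by
  obtain ⟨D, _, hD⟩ := h.decay c 0
  have hc := h.continuous
  refine (tw_wint C M f b).mul_bdd (c := D) ?_ (Filter.Eventually.of_forall fun s => ?_)
  · exact Continuous.aestronglyMeasurable (by fun_prop)
  · have := hD (t - s)
    rw [norm_iteratedFDeriv_zero] at this
    simpa using this

theorem tw_pt {A : Type*} [NormedRing A] [NormedAlgebra ℂ A]
    (α : ℝ → A ≃ₐ[ℂ] A) (C : ℝ) (M : ℕ)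
    (hpoly : ∀ (t : ℝ) (a : A), ‖α t a‖ ≤ C * (1 + |t| ^ M) * ‖a‖)
    (s : ℝ) (x y : A) :
    ‖x * α s y‖ ≤ C * (‖x‖ + |s| ^ M * ‖x‖) * ‖y‖ := by
  calc ‖x * α s y‖ ≤ ‖x‖ * ‖α s y‖ := norm_mul_le _ _
    _ ≤ ‖x‖ * (C * (1 + |s| ^ M) * ‖y‖) := by gcongr; exact hpoly s y
    _ = _ := by ring

theorem tw_cont {A : Type*} [NormedRing A] [NormedAlgebra ℂ A]
    (α : ℝ → A ≃ₐ[ℂ] A) (hcont : Continuous fun p : ℝ × A => α p.1 p.2)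
    (f h : SchwartzMap ℝ A) (t : ℝ) :
    Continuous fun s : ℝ => f s * α s (h (t - s)) := by
  have hf := f.continuous
  have hh := h.continuous
  exact hf.mul (hcont.comp (f := fun s : ℝ => (s, h (t - s))) (by fun_prop))

open MeasureTheory SchwartzMap in
theorem tw_int {A : Type*} [NormedRing A] [NormedAlgebra ℂ A]
    (α : ℝ → A ≃ₐ[ℂ] A) (hcont : Continuous fun p : ℝ × A => α p.1 p.2)
    (C : ℝ) (M : ℕ)
    (hpoly : ∀ (t : ℝ) (a : A), ‖α t a‖ ≤ C * (1 + |t| ^ M) * ‖a‖)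
    (f h : SchwartzMap ℝ A) (t : ℝ) :
    Integrable fun s : ℝ => f s * α s (h (t - s)) := by
  refine (tw_kint C M f h 0 0 t).mono' (tw_cont α hcont f h t).aestronglyMeasurable
    (Filter.Eventually.of_forall fun s => ?_)
  simpa using tw_pt α C M hpoly s (f s) (h (t - s))

open MeasureTheory SchwartzMap in
theorem tw_deriv {A : Type*} [NormedRing A] [NormedAlgebra ℂ A] [CompleteSpace A]
    (α : ℝ → A ≃ₐ[ℂ] A) (hcont : Continuous fun p : ℝ × A => α p.1 p.2)
    (C : ℝ) (hC : 0 < C) (M : ℕ)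
    (hpoly : ∀ (t : ℝ) (a : A), ‖α t a‖ ≤ C * (1 + |t| ^ M) * ‖a‖)
    (f h : SchwartzMap ℝ A) (t : ℝ) :
    HasDerivAt (fun t : ℝ => ∫ s : ℝ, f s * α s (h (t - s)))
      (∫ s : ℝ, f s * α s (derivCLM ℝ A h (t - s))) t := by
  obtain ⟨D, _, hD⟩ := (derivCLM ℝ A h).decay 0 0
  have hD' : ∀ x, ‖derivCLM ℝ A h x‖ ≤ D := fun x => by
    have := hD x
    rw [norm_iteratedFDeriv_zero] at this
    simpa using this
  refine (hasDerivAt_integral_of_dominated_loc_of_deriv_le (s := Set.univ)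
    (F' := fun t s => f s * α s (derivCLM ℝ A h (t - s)))
    (bound := fun s => C * (|s| ^ 0 * ‖f s‖ + |s| ^ (0 + M) * ‖f s‖) * D) Filter.univ_mem
    (Filter.Eventually.of_forall fun x => (tw_cont α hcont f h x).aestronglyMeasurable)
    (tw_int α hcont C M hpoly f h t)
    (tw_cont α hcont f _ t).aestronglyMeasurable
    (Filter.Eventually.of_forall fun s x _ => ?_)
    ((tw_wint C M f 0).mul_const D)
    (Filter.Eventually.of_forall fun s x _ => ?_)).2
  · refine (tw_pt α C M hpoly s _ _).trans ?_
    simp only [pow_zero, one_mul, zero_add]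
    gcongr
    exact hD' _
  · have h1 : HasDerivAt (fun x => h (x - s)) (derivCLM ℝ A h (x - s)) x := by
      have : HasDerivAt h (derivCLM ℝ A h (x - s)) (x - s) := by
        rw [derivCLM_apply]
        exact h.differentiableAt.hasDerivAt
      exact this.comp_sub_const x s
    let L : A →L[ℂ] A := (α s).toLinearMap.mkContinuous (C * (1 + |s| ^ M)) (hpoly s)
    have h2 : HasDerivAt (fun x => L (h (x - s))) (L (derivCLM ℝ A h (x - s))) x :=
      (L.restrictScalars ℝ).hasFDerivAt.comp_hasDerivAt x h1
    exact h2.const_mul (f s)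

open MeasureTheory SchwartzMap in
theorem tw_iter {A : Type*} [NormedRing A] [NormedAlgebra ℂ A] [CompleteSpace A]
    (α : ℝ → A ≃ₐ[ℂ] A) (hcont : Continuous fun p : ℝ × A => α p.1 p.2)
    (C : ℝ) (hC : 0 < C) (M : ℕ)
    (hpoly : ∀ (t : ℝ) (a : A), ‖α t a‖ ≤ C * (1 + |t| ^ M) * ‖a‖)
    (f g : SchwartzMap ℝ A) (j : ℕ) :
    ∃ h : SchwartzMap ℝ A, iteratedDeriv j (⇑g) = ⇑h ∧
      iteratedDeriv j (fun t : ℝ => ∫ s : ℝ, f s * α s (g (t - s))) =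
        fun t : ℝ => ∫ s : ℝ, f s * α s (h (t - s)) := by
  induction j with
  | zero => exact ⟨g, iteratedDeriv_zero, iteratedDeriv_zero⟩
  | succ n ih =>
    obtain ⟨h, h1, h2⟩ := ih
    refine ⟨derivCLM ℝ A h, ?_, ?_⟩
    · rw [iteratedDeriv_succ, h1]
      ext x
      rw [derivCLM_apply]
    · rw [iteratedDeriv_succ, h2]
      ext x
      exact (tw_deriv α hcont C hC M hpoly f h x).deriv

open MeasureTheory SchwartzMap in
theorem tw_est {A : Type*} [NormedRing A] [NormedAlgebra ℂ A] [CompleteSpace A]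
    (α : ℝ → A ≃ₐ[ℂ] A)
    (C : ℝ) (hC : 0 < C) (M : ℕ)
    (hpoly : ∀ (t : ℝ) (a : A), ‖α t a‖ ≤ C * (1 + |t| ^ M) * ‖a‖)
    (f h : SchwartzMap ℝ A) (i : ℕ) :
    (∫ t : ℝ, |t| ^ i * ‖∫ s : ℝ, f s * α s (h (t - s))‖)
      ≤ C * ∑ β ∈ Finset.range (i + 1), (i.choose β : ℝ) *
            ((∫ t : ℝ, |t| ^ β * ‖f t‖) + (∫ t : ℝ, |t| ^ (β + M) * ‖f t‖)) *
            (∫ t : ℝ, |t| ^ (i - β) * ‖h t‖) := by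
  let k : ℕ → ℝ → ℝ := fun b s => C * (|s| ^ b * ‖f s‖ + |s| ^ (b + M) * ‖f s‖)
  let H : ℕ → ℝ → ℝ := fun c s => |s| ^ c * ‖h s‖
  have hk : ∀ b, Integrable (k b) := tw_wint C M f
  have hH : ∀ c, Integrable (H c) := fun c => h.integrable_pow_mul volume c
  have hkH : ∀ b c t, Integrable (fun s => k b s * H c (t - s)) := tw_kint C M f h
  have hconv : ∀ b c, Integrable (fun t => ∫ s, k b s * H c (t - s)) := fun b c =>
    (hk b).integrable_convolution (ContinuousLinearMap.mul ℝ ℝ) (hH c)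
  have hconv2 : ∀ b c, ∫ t, ∫ s, k b s * H c (t - s) = (∫ s, k b s) * ∫ s, H c s := fun b c =>
    integral_convolution (ContinuousLinearMap.mul ℝ ℝ) (hk b) (hH c)
  have hpt : ∀ t : ℝ, |t| ^ i * ‖∫ s : ℝ, f s * α s (h (t - s))‖ ≤
      ∑ β ∈ Finset.range (i + 1), (i.choose β : ℝ) * ∫ s, k β s * H (i - β) (t - s) := by
    intro t
    have e : ∑ β ∈ Finset.range (i + 1), (i.choose β : ℝ) * ∫ s, k β s * H (i - β) (t - s)
        = ∫ s, ∑ β ∈ Finset.range (i + 1), (i.choose β : ℝ) * (k β s * H (i - β) (t - s)) := by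
      rw [integral_finsetSum _ fun b _ => (hkH b (i - b) t).const_mul _]
      simp only [integral_const_mul]
    rw [e]
    calc |t| ^ i * ‖∫ s : ℝ, f s * α s (h (t - s))‖
        ≤ |t| ^ i * ∫ s : ℝ, ‖f s * α s (h (t - s))‖ := by
          gcongr
          exact norm_integral_le_integral_norm _
      _ = ∫ s : ℝ, |t| ^ i * ‖f s * α s (h (t - s))‖ := (integral_const_mul _ _).symm
      _ ≤ _ := by
          refine integral_mono_of_nonneg (Filter.Eventually.of_forall fun s => by positivity)
            (integrable_finsetSum _ fun b _ => (hkH b (i - b) t).const_mul _)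
            (Filter.Eventually.of_forall fun s => ?_)
          have h1 : |t| ^ i ≤ (|s| + |t - s|) ^ i := by
            gcongr
            calc |t| = |s + (t - s)| := by ring_nf
              _ ≤ _ := abs_add_le _ _
          calc |t| ^ i * ‖f s * α s (h (t - s))‖
              ≤ (|s| + |t - s|) ^ i * (C * (‖f s‖ + |s| ^ M * ‖f s‖) * ‖h (t - s)‖) := by
                gcongr
                exact tw_pt α C M hpoly s _ _
            _ = _ := by
                rw [add_pow, Finset.sum_mul]
                refine Finset.sum_congr rfl fun b _ => ?_
                simp only [k, H, pow_add]
                ring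
  calc _ ≤ ∫ t, ∑ β ∈ Finset.range (i + 1), (i.choose β : ℝ) * ∫ s, k β s * H (i - β) (t - s) :=
        integral_mono_of_nonneg (Filter.Eventually.of_forall fun s => by positivity)
          (integrable_finsetSum _ fun b _ => (hconv b (i - b)).const_mul _)
          (Filter.Eventually.of_forall hpt)
    _ = _ := by
      rw [integral_finsetSum _ fun b _ => (hconv b (i - b)).const_mul _, Finset.mul_sum]
      refine Finset.sum_congr rfl fun b _ => ?_
      rw [integral_const_mul, hconv2]
      have : ∫ s, k b s = C * ((∫ t : ℝ, |t| ^ b * ‖f t‖) + ∫ t : ℝ, |t| ^ (b + M) * ‖f t‖) := by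
        simp only [k]
        rw [integral_const_mul]
        exact congrArg (C * ·) (integral_add (f.integrable_pow_mul volume b)
          (f.integrable_pow_mul volume (b + M)))
      rw [this]
      simp only [H]
      ring


open MeasureTheory SchwartzMap in
/-- Equation `eq.robert`: for a one-parameter group `α` of automorphisms with polynomial
growth (`‖α_t a‖ ≤ C(1+|t|^M)‖a‖`) of a Banach algebra `A`, the twisted convolution
`(f*g)(t) = ∫ f(s) α_s(g(t-s)) ds` of Schwartz functions `f, g ∈ 𝒮(ℝ, A)` is smooth with
`(f*g)^{(j)}(t) = ∫ f(s) α_s(g^{(j)}(t-s)) ds`, and satisfies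
`‖f*g‖_{n,i,j} ≤ C ∑_{β+γ=i} (i choose β)(‖f‖_{β,0} + ‖f‖_{β+M,0})‖g‖_{γ,j}`,
where `‖h‖_{i,j} = ∫ |t|^i ‖h^{(j)}(t)‖ dt`. -/
theorem stmt_15
    (A : Type*) [NormedRing A] [NormedAlgebra ℂ A] [CompleteSpace A]
    (α : ℝ → A ≃ₐ[ℂ] A)
    (hgrp : ∀ t s : ℝ, ∀ a : A, α (t + s) a = α t (α s a))
    (h0 : ∀ a : A, α 0 a = a)
    (hcont : Continuous fun p : ℝ × A => α p.1 p.2)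
    (C : ℝ) (hC : 0 < C) (M : ℕ)
    (hpoly : ∀ (t : ℝ) (a : A), ‖α t a‖ ≤ C * (1 + |t| ^ M) * ‖a‖)
    (f g : SchwartzMap ℝ A) (i j : ℕ) :
    ContDiff ℝ (⊤ : ℕ∞) (fun t : ℝ => ∫ s : ℝ, f s * α s (g (t - s))) ∧
    (∀ t : ℝ, iteratedDeriv j (fun t : ℝ => ∫ s : ℝ, f s * α s (g (t - s))) t
        = ∫ s : ℝ, f s * α s (iteratedDeriv j (⇑g) (t - s))) ∧
    (∫ t : ℝ, |t| ^ i *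
        ‖iteratedDeriv j (fun t : ℝ => ∫ s : ℝ, f s * α s (g (t - s))) t‖)
      ≤ C * ∑ β ∈ Finset.range (i + 1), (i.choose β : ℝ) *
            ((∫ t : ℝ, |t| ^ β * ‖f t‖) + (∫ t : ℝ, |t| ^ (β + M) * ‖f t‖)) *
            (∫ t : ℝ, |t| ^ (i - β) * ‖iteratedDeriv j (⇑g) t‖) := by
  refine ⟨?_, ?_, ?_⟩
  · refine contDiff_of_differentiable_iteratedDeriv fun m _ => ?_
    obtain ⟨h, -, h2⟩ := tw_iter α hcont C hC M hpoly f g m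
    rw [h2]
    exact fun t => (tw_deriv α hcont C hC M hpoly f h t).differentiableAt
  · obtain ⟨h, h1, h2⟩ := tw_iter α hcont C hC M hpoly f g j
    intro t
    rw [h2, h1]
  · obtain ⟨h, h1, h2⟩ := tw_iter α hcont C hC M hpoly f g j
    rw [h2, h1]
    exact tw_est α C hC M hpoly f h i
end

section
/- For all f, g ∈ 𝒮(ℝ, A), the integral defining the twisted convolution (f * g)(t) = ∫_ℝ f(s)·α_s(g(t − s)) ds converges absolutely for every t ∈ ℝ, and f * g again belongs to the Schwartz space 𝒮(ℝ, A): it is smooth and sup_{t∈ℝ} |t|^i ‖(f*g)^{(j)}(t)‖ < ∞ for all i, j ∈ ℕ. Hence the twisted convolution makes 𝒮(ℝ, A) into an algebra. -/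
open MeasureTheory in
theorem aux_W {A : Type*} [NormedRing A] [NormedAlgebra ℂ A] (f : SchwartzMap ℝ A) (n : ℕ) :
    Integrable (fun s : ℝ => (1 + |s|) ^ n * ‖f s‖) := by
  have : (fun s : ℝ => (1 + |s|) ^ n * ‖f s‖) =
      fun s : ℝ => ∑ k ∈ Finset.range (n + 1), (n.choose k : ℝ) * (‖s‖ ^ k * ‖f s‖) := by
    funext s
    rw [add_comm, add_pow, Finset.sum_mul]
    refine Finset.sum_congr rfl fun k _ => ?_
    simp only [one_pow, Real.norm_eq_abs]
    ring
  rw [this]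
  exact integrable_finsetSum _ fun k _ => (f.integrable_pow_mul volume k).const_mul _

theorem aux_dec {A : Type*} [NormedRing A] [NormedAlgebra ℂ A] (g : SchwartzMap ℝ A) (n : ℕ) :
    ∃ K : ℝ, 0 ≤ K ∧ ∀ u : ℝ, (1 + |u|) ^ n * ‖g u‖ ≤ K := by
  have h := fun u => SchwartzMap.one_add_le_sup_seminorm_apply (𝕜 := ℝ) (m := (n, 0)) (k := n) (n := 0)
    le_rfl le_rfl g u
  simp only [norm_iteratedFDeriv_zero, Real.norm_eq_abs] at h
  refine ⟨_, ?_, h⟩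
  exact le_trans (by positivity) (h 0)

theorem aux_peetre (n : ℕ) (s t : ℝ) : (1 + |t|) ^ n ≤ (1 + |s|) ^ n * (1 + |t - s|) ^ n := by
  rw [← mul_pow]
  have : |t| ≤ |s| + |t - s| := by
    have := abs_add_le s (t - s)
    simpa using this
  gcongr
  nlinarith [abs_nonneg s, abs_nonneg (t - s), mul_nonneg (abs_nonneg s) (abs_nonneg (t - s))]

section
open MeasureTheory
theorem aux_bound {A : Type*} [NormedRing A] [NormedAlgebra ℂ A] [CompleteSpace A]
    (α : ℝ → A ≃ₐ[ℂ] A) (K : ℝ) (M : ℕ)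
    (hp : ∀ (t : ℝ) (a : A), ‖α t a‖ ≤ K * (1 + |t|) ^ M * ‖a‖)
    (f g : SchwartzMap ℝ A) (s u : ℝ) :
    ‖f s * α s (g u)‖ ≤ K * ((1 + |s|) ^ M * ‖f s‖) * ‖g u‖ := by
  calc _ ≤ ‖f s‖ * ‖α s (g u)‖ := norm_mul_le _ _
    _ ≤ ‖f s‖ * (K * (1 + |s|) ^ M * ‖g u‖) := by gcongr; exact hp _ _
    _ = _ := by ring

theorem aux_cont {A : Type*} [NormedRing A] [NormedAlgebra ℂ A] [CompleteSpace A]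
    (α : ℝ → A ≃ₐ[ℂ] A)
    (hcont : Continuous fun p : ℝ × A => α p.1 p.2)
    (f g : SchwartzMap ℝ A) (t : ℝ) :
    Continuous (fun s : ℝ => f s * α s (g (t - s))) := by
  refine f.continuous.mul ?_
  exact hcont.comp (continuous_id.prodMk (g.continuous.comp (by fun_prop)))

theorem aux_int {A : Type*} [NormedRing A] [NormedAlgebra ℂ A] [CompleteSpace A]
    (α : ℝ → A ≃ₐ[ℂ] A)
    (hcont : Continuous fun p : ℝ × A => α p.1 p.2) (K : ℝ) (hK : 0 ≤ K) (M : ℕ)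
    (hp : ∀ (t : ℝ) (a : A), ‖α t a‖ ≤ K * (1 + |t|) ^ M * ‖a‖)
    (f g : SchwartzMap ℝ A) (t : ℝ) :
    Integrable (fun s : ℝ => f s * α s (g (t - s))) := by
  obtain ⟨D, hD, h⟩ := aux_dec g 0
  refine Integrable.mono' (((aux_W f M).const_mul K).mul_const D)
    (aux_cont α hcont f g t).aestronglyMeasurable (ae_of_all _ fun s => ?_)
  refine (aux_bound α K M hp f g s _).trans ?_
  have := h (t - s)
  simp only [pow_zero, one_mul] at this
  gcongr

theorem aux_deriv {A : Type*} [NormedRing A] [NormedAlgebra ℂ A] [CompleteSpace A]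
    (α : ℝ → A ≃ₐ[ℂ] A)
    (hcont : Continuous fun p : ℝ × A => α p.1 p.2) (K : ℝ) (hK : 0 ≤ K) (M : ℕ)
    (hp : ∀ (t : ℝ) (a : A), ‖α t a‖ ≤ K * (1 + |t|) ^ M * ‖a‖)
    (f g : SchwartzMap ℝ A) (t : ℝ) :
    HasDerivAt (fun t : ℝ => ∫ s : ℝ, f s * α s (g (t - s)))
      (∫ s : ℝ, f s * α s (SchwartzMap.derivCLM ℝ A g (t - s))) t := by
  obtain ⟨D, hD, h⟩ := aux_dec (SchwartzMap.derivCLM ℝ A g) 0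
  refine (hasDerivAt_integral_of_dominated_loc_of_deriv_le (μ := volume)
    (F := fun t s => f s * α s (g (t - s)))
    (F' := fun t s => f s * α s (SchwartzMap.derivCLM ℝ A g (t - s)))
    (bound := fun s => K * ((1 + |s|) ^ M * ‖f s‖) * D) (s := Set.univ) Filter.univ_mem
    (Filter.Eventually.of_forall fun t => (aux_cont α hcont f g t).aestronglyMeasurable)
    (aux_int α hcont K hK M hp f g t)
    (aux_cont α hcont f _ t).aestronglyMeasurable
    (ae_of_all _ fun s x _ => ?_)
    (((aux_W f M).const_mul K).mul_const D)
    (ae_of_all _ fun s x _ => ?_)).2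
  · refine (aux_bound α K M hp f _ s _).trans ?_
    have := h (x - s)
    simp only [pow_zero, one_mul] at this
    gcongr
  · let L : A →L[ℝ] A := ((α s).toLinearMap.restrictScalars ℝ).mkContinuous
      (K * (1 + |s|) ^ M) (fun a => hp s a)
    have h1 : HasDerivAt (fun x => g (x - s)) (SchwartzMap.derivCLM ℝ A g (x - s)) x := by
      have := (g.differentiableAt (x := x - s)).hasDerivAt
      exact this.comp_sub_const x s
    exact (L.hasFDerivAt.comp_hasDerivAt x h1).const_mul (f s)

theorem aux_iter {A : Type*} [NormedRing A] [NormedAlgebra ℂ A] [CompleteSpace A]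
    (α : ℝ → A ≃ₐ[ℂ] A)
    (hcont : Continuous fun p : ℝ × A => α p.1 p.2) (K : ℝ) (hK : 0 ≤ K) (M : ℕ)
    (hp : ∀ (t : ℝ) (a : A), ‖α t a‖ ≤ K * (1 + |t|) ^ M * ‖a‖)
    (f : SchwartzMap ℝ A) (j : ℕ) : ∀ g : SchwartzMap ℝ A, ∃ g' : SchwartzMap ℝ A,
    iteratedDeriv j (fun t : ℝ => ∫ s : ℝ, f s * α s (g (t - s))) =
      fun t : ℝ => ∫ s : ℝ, f s * α s (g' (t - s)) := by
  induction j with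
  | zero => exact fun g => ⟨g, iteratedDeriv_zero⟩
  | succ j ih =>
    intro g
    obtain ⟨g', hg'⟩ := ih (SchwartzMap.derivCLM ℝ A g)
    refine ⟨g', ?_⟩
    rw [iteratedDeriv_succ', ← hg']
    congr 1
    funext t
    exact (aux_deriv α hcont K hK M hp f g t).deriv

theorem aux_decay {A : Type*} [NormedRing A] [NormedAlgebra ℂ A] [CompleteSpace A]
    (α : ℝ → A ≃ₐ[ℂ] A) (K : ℝ) (hK : 0 ≤ K) (M : ℕ)
    (hp : ∀ (t : ℝ) (a : A), ‖α t a‖ ≤ K * (1 + |t|) ^ M * ‖a‖)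
    (f g : SchwartzMap ℝ A) (i : ℕ) : ∃ D : ℝ, ∀ t : ℝ,
    |t| ^ i * ‖∫ s : ℝ, f s * α s (g (t - s))‖ ≤ D := by
  obtain ⟨D, hD, h⟩ := aux_dec g i
  refine ⟨∫ s : ℝ, K * ((1 + |s|) ^ (M + i) * ‖f s‖) * D, fun t => ?_⟩
  have e : |t| ^ i * ‖∫ s : ℝ, f s * α s (g (t - s))‖
      = ‖∫ s : ℝ, (|t| ^ i) • (f s * α s (g (t - s)))‖ := by
    rw [integral_smul, norm_smul]; simp
  rw [e]
  refine norm_integral_le_of_norm_le (((aux_W f (M + i)).const_mul K).mul_const D)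
    (ae_of_all _ fun s => ?_)
  have h1 : |t| ^ i ≤ (1 + |s|) ^ i * (1 + |t - s|) ^ i :=
    le_trans (by gcongr; linarith) (aux_peetre i s t)
  rw [norm_smul]
  calc _ ≤ ((1 + |s|) ^ i * (1 + |t - s|) ^ i) *
        (K * ((1 + |s|) ^ M * ‖f s‖) * ‖g (t - s)‖) := by
        gcongr
        · simpa using h1
        · exact aux_bound α K M hp f g s _
    _ = K * ((1 + |s|) ^ (M + i) * ‖f s‖) * ((1 + |t - s|) ^ i * ‖g (t - s)‖) := by ring
    _ ≤ _ := by gcongr; exact h _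

theorem aux_fub {A : Type*} [NormedRing A] [NormedAlgebra ℂ A] [CompleteSpace A]
    (α : ℝ → A ≃ₐ[ℂ] A)
    (hcont : Continuous fun p : ℝ × A => α p.1 p.2) (K : ℝ) (hK : 0 ≤ K) (M : ℕ)
    (hp : ∀ (t : ℝ) (a : A), ‖α t a‖ ≤ K * (1 + |t|) ^ M * ‖a‖)
    (f g h : SchwartzMap ℝ A) (t : ℝ) :
    Integrable (fun p : ℝ × ℝ => f p.2 * α p.2 (g (p.1 - p.2)) * α p.1 (h (t - p.1)))
      (volume.prod volume) := by
  obtain ⟨D, hD, hh⟩ := aux_dec h 0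
  have I := (Integrable.convolution_integrand (ContinuousLinearMap.mul ℝ ℝ)
    (aux_W f (M + M)) (aux_W g M)).const_mul (K * K * D)
  refine I.mono' ?_ (ae_of_all _ fun p => ?_)
  · refine Continuous.aestronglyMeasurable ?_
    refine ((f.continuous.comp continuous_snd).mul ?_).mul ?_
    · exact hcont.comp (continuous_snd.prodMk
        (g.continuous.comp (continuous_fst.sub continuous_snd)))
    · exact hcont.comp (continuous_fst.prodMk
        (h.continuous.comp (continuous_const.sub continuous_fst)))
  · obtain ⟨s, r⟩ := p
    simp only [ContinuousLinearMap.mul_apply']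
    have h1 := hh (t - s)
    simp only [pow_zero, one_mul] at h1
    calc _ ≤ ‖f r * α r (g (s - r))‖ * ‖α s (h (t - s))‖ := norm_mul_le _ _
      _ ≤ (K * ((1 + |r|) ^ M * ‖f r‖) * ‖g (s - r)‖) *
          (K * ((1 + |r|) ^ M * (1 + |s - r|) ^ M) * D) := by
          refine mul_le_mul (aux_bound α K M hp f g r _) ((hp _ _).trans ?_) (norm_nonneg _)
            (by positivity)
          gcongr
          exact aux_peetre M r s
      _ = _ := by ring

end


open MeasureTheory in
/-- For a one-parameter automorphism group `α` with polynomial growth of a Banach algebra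
`A`, the twisted convolution `(f*g)(t) = ∫ f(s) α_s(g(t-s)) ds` of Schwartz functions
converges absolutely for every `t`, again belongs to `𝒮(ℝ, A)` (it is smooth and all
`sup_t |t|^i ‖(f*g)^{(j)}(t)‖` are finite), and the twisted convolution is associative, so
that it makes `𝒮(ℝ, A)` into an algebra. -/
theorem stmt_16
    (A : Type*) [NormedRing A] [NormedAlgebra ℂ A] [CompleteSpace A]
    (α : ℝ → A ≃ₐ[ℂ] A)
    (hgrp : ∀ t s : ℝ, ∀ a : A, α (t + s) a = α t (α s a))
    (h0 : ∀ a : A, α 0 a = a)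
    (hcont : Continuous fun p : ℝ × A => α p.1 p.2)
    (C : ℝ) (hC : 0 < C) (M : ℕ)
    (hpoly : ∀ (t : ℝ) (a : A), ‖α t a‖ ≤ C * (1 + |t| ^ M) * ‖a‖) :
    -- absolute convergence
    (∀ f g : SchwartzMap ℝ A, ∀ t : ℝ,
        Integrable (fun s : ℝ => f s * α s (g (t - s)))) ∧
    -- `f * g` is again a Schwartz function
    (∀ f g : SchwartzMap ℝ A,
        ContDiff ℝ (⊤ : ℕ∞) (fun t : ℝ => ∫ s : ℝ, f s * α s (g (t - s))) ∧
        ∀ i j : ℕ, ∃ D : ℝ, ∀ t : ℝ,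
          |t| ^ i * ‖iteratedDeriv j
              (fun t : ℝ => ∫ s : ℝ, f s * α s (g (t - s))) t‖ ≤ D) ∧
    -- the twisted convolution is associative, making `𝒮(ℝ, A)` an algebra
    (∀ f g h : SchwartzMap ℝ A, ∀ t : ℝ,
        (∫ s : ℝ, (∫ r : ℝ, f r * α r (g (s - r))) * α s (h (t - s)))
          = ∫ s : ℝ, f s * α s ((∫ r : ℝ, g r * α r (h (t - s - r))))) := by
  have hK : 0 ≤ 2 * C := by positivity
  have hp : ∀ (t : ℝ) (a : A), ‖α t a‖ ≤ 2 * C * (1 + |t|) ^ M * ‖a‖ := by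
    intro t a
    refine (hpoly t a).trans ?_
    have h1 : (1 : ℝ) ≤ (1 + |t|) ^ M := one_le_pow₀ (by linarith [abs_nonneg t])
    have h2 : |t| ^ M ≤ (1 + |t|) ^ M := by gcongr; linarith
    have : C * (1 + |t| ^ M) ≤ 2 * C * (1 + |t|) ^ M := by nlinarith
    gcongr
  refine ⟨aux_int α hcont _ hK M hp, fun f g => ⟨?_, fun i j => ?_⟩, fun f g h t => ?_⟩
  · refine contDiff_of_differentiable_iteratedDeriv fun j _ => ?_
    obtain ⟨g', hg'⟩ := aux_iter α hcont _ hK M hp f j g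
    rw [hg']
    exact fun t => (aux_deriv α hcont _ hK M hp f g' t).differentiableAt
  · obtain ⟨g', hg'⟩ := aux_iter α hcont _ hK M hp f j g
    rw [hg']
    exact aux_decay α _ hK M hp f g' i
  · have e1 : ∀ s : ℝ, (∫ r : ℝ, f r * α r (g (s - r))) * α s (h (t - s)) =
        ∫ r : ℝ, f r * α r (g (s - r)) * α s (h (t - s)) := fun s =>
      (integral_mul_const_of_integrable (aux_int α hcont _ hK M hp f g s)).symm
    simp_rw [e1]
    rw [integral_integral_swap (aux_fub α hcont _ hK M hp f g h t)]
    congr 1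
    funext r
    rw [← integral_add_right_eq_self _ r]
    let L : A →L[ℝ] A := ((α r).toLinearMap.restrictScalars ℝ).mkContinuous
      (2 * C * (1 + |r|) ^ M) (fun a => hp r a)
    have I := aux_int α hcont _ hK M hp g h (t - r)
    have e2 : α r (∫ s : ℝ, g s * α s (h (t - r - s))) =
        ∫ s : ℝ, α r (g s * α s (h (t - r - s))) := (L.integral_comp_comm I).symm
    have I2 : Integrable (fun s : ℝ => α r (g s * α s (h (t - r - s)))) := L.integrable_comp I
    rw [e2, ← integral_const_mul_of_integrable I2]
    congr 1
    funext s
    rw [add_sub_cancel_right, map_mul, ← hgrp, mul_assoc, add_comm s r, sub_sub]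
end
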